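/- Let p be a prime and let 0 ≤ u ≤ v and 1 ≤ r ≤ m−2 be integers. Set B = ℤ/p^mℤ ⊕ ℤ/p^rℤ and let A be the cyclic subgroup of B generated by (p^{m−2}, p^{r−1}). Then the number of group homomorphisms f : ℤ/p^vℤ → B with f(p^{v−u}(ℤ/p^vℤ)) ⊆ A equals: p^{min{v,r} + min{v,m}} if u = 0; p^{min{v−1,r} + min{v,m}} if u = 1; and p^{min{v−u+1,r} + min{v−u+1,m}} if u ≥ 2. -/

import Mathlib

/-!
A homomorphism `ℤ/p^v → B` is an element `z` of the `p^v`-torsion of `B`, and it is a morphism of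
pairs exactly when `p^(v-u) • z ∈ A`. As `p^v = p^u * p^(v-u)`, both conditions together say that
`p^(v-u) • z` lies in the `p^u`-torsion of `A`. This torsion is `0` for `u = 0`, is
`(ℤ/p^m)[p] × 0` for `u = 1`, and is all of `A` for `u ≥ 2`. For `u ≥ 2` and `v - u < r`, every
element of `A` is divisible by `p^(v-u)`, so the count is `|A| = p^2` times the order of the
`p^(v-u)`-torsion of `B`. For `u ≥ 2` and `v - u ≥ r`, multiplication by `p^(v-u)` kills the second
coordinate, and the elements of `A` with zero second coordinate are again `(ℤ/p^m)[p] × 0`.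
-/

open AddSubgroup

theorem card_comap_of_le_range {G H : Type*} [AddGroup G] [AddGroup H] (f : G →+ H)
    {K : AddSubgroup H} (hK : K ≤ f.range) :
    Nat.card (K.comap f) = Nat.card f.ker * Nat.card K := by
  have h_index : f.ker.relIndex (K.comap f) = Nat.card K := by
    rw [relIndex_ker, map_comap_eq_self hK]
  rw [← relIndex_bot_left (K.comap f), ← relIndex_mul_relIndex _ _ _ bot_le (ker_le_comap f K),
    relIndex_bot_left, h_index]

section AddCommGroup

variable {A B : Type*} [AddCommGroup A] [AddCommGroup B]

theorem ker_nsmulAddMonoidHom (n : ℕ) : (nsmulAddMonoidHom n : B →+ B).ker = torsionBy B n := by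
  ext b
  rw [AddMonoidHom.mem_ker, nsmulAddMonoidHom_apply, torsionBy.nsmul_iff]

theorem torsionBy_prod (n : ℕ) :
    torsionBy (A × B) n = (torsionBy A n).prod (torsionBy B n) := by
  ext z
  simp only [mem_prod, torsionBy.nsmul_iff, Prod.ext_iff, Prod.smul_fst, Prod.smul_snd,
    Prod.fst_zero, Prod.snd_zero]

theorem comap_nsmulAddMonoidHom_torsionBy_prod_bot (d k : ℕ) :
    ((torsionBy A d).prod (⊥ : AddSubgroup B)).comap (nsmulAddMonoidHom k) =
      (torsionBy A ((d * k : ℕ) : ℤ)).prod (torsionBy B k) := by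
  ext z
  simp only [mem_comap, nsmulAddMonoidHom_apply, mem_prod, mem_bot, torsionBy.nsmul_iff,
    Prod.smul_fst, Prod.smul_snd, mul_nsmul']

/-- Homomorphisms out of `ℤ/n` correspond to `n`-torsion elements, namely the images of `1`. -/
def torsionByEquivZModHom (n : ℕ) : torsionBy B n ≃ (ZMod n →+ B) :=
  ((zmultiplesHom B).subtypeEquiv fun b => by
    rw [zmultiplesHom_apply]; exact Submodule.mem_torsionBy_iff _ _).trans (ZMod.lift n)

theorem torsionByEquivZModHom_natCast {n : ℕ} (b : torsionBy B n) (k : ℕ) :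
    torsionByEquivZModHom n b k = k • (b : B) := by
  rw [← natCast_zsmul, ← Int.cast_natCast (R := ZMod n)]
  exact ZMod.lift_coe n _ _

theorem card_zmodHom_map_zmultiples_mem {n d k : ℕ} (hn : d * k = n) (H : AddSubgroup B) :
    Nat.card {f : ZMod n →+ B // ∀ a ∈ zmultiples (k : ZMod n), f a ∈ H} =
      Nat.card ((H ⊓ torsionBy B d).comap (nsmulAddMonoidHom k)) := by
  have h_generator (f : ZMod n →+ B) :
      (∀ a ∈ zmultiples (k : ZMod n), f a ∈ H) ↔ f k ∈ H :=
    zmultiples_le (H := H.comap f)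
  have h_torsion (b : B) : b ∈ torsionBy B n ↔ k • b ∈ torsionBy B d := by
    rw [torsionBy.nsmul_iff, torsionBy.nsmul_iff, ← hn, mul_nsmul']
  calc Nat.card {f : ZMod n →+ B // ∀ a ∈ zmultiples (k : ZMod n), f a ∈ H}
      = Nat.card {b : torsionBy B n // k • (b : B) ∈ H} :=
        (Nat.card_congr <| (torsionByEquivZModHom n).subtypeEquiv fun b => by
          rw [h_generator, torsionByEquivZModHom_natCast]).symm
    _ = Nat.card {b : B // b ∈ torsionBy B n ∧ k • b ∈ H} :=
        Nat.card_congr (Equiv.subtypeSubtypeEquivSubtypeInter _ (k • · ∈ H))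
    _ = Nat.card ((H ⊓ torsionBy B d).comap (nsmulAddMonoidHom k)) :=
        Nat.card_congr <| Equiv.subtypeEquivRight fun b => by
          rw [mem_comap, mem_inf, nsmulAddMonoidHom_apply, h_torsion, and_comm]

end AddCommGroup

section ZModPow

variable {p : ℕ}

theorem pow_gcd_pow_eq_pow_min (p a b : ℕ) : (p ^ a).gcd (p ^ b) = p ^ min a b := by
  rcases le_total a b with h | h
  · rw [min_eq_left h, Nat.gcd_eq_left (pow_dvd_pow p h)]
  · rw [min_eq_right h, Nat.gcd_eq_right (pow_dvd_pow p h)]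

theorem card_torsionBy_zmod_pow (hp : p ≠ 0) (n w : ℕ) :
    Nat.card (torsionBy (ZMod (p ^ n)) ((p ^ w : ℕ) : ℤ)) = p ^ min w n := by
  have : NeZero (p ^ n) := ⟨pow_ne_zero n hp⟩
  rw [← ker_nsmulAddMonoidHom, IsAddCyclic.card_nsmulAddMonoidHom_ker, Nat.card_zmod,
    pow_gcd_pow_eq_pow_min, min_comm]

theorem card_torsionBy_zmod_pow_prod (hp : p ≠ 0) (m r i j : ℕ) :
    Nat.card ((torsionBy (ZMod (p ^ m)) ((p ^ i : ℕ) : ℤ)).prod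
      (torsionBy (ZMod (p ^ r)) ((p ^ j : ℕ) : ℤ))) = p ^ (min j r + min i m) := by
  rw [Nat.card_congr (prodEquiv _ _).toEquiv, Nat.card_prod, card_torsionBy_zmod_pow hp,
    card_torsionBy_zmod_pow hp, ← pow_add, add_comm]

theorem intCast_mul_pow_eq_zero_iff (hp : p ≠ 0) {n a b : ℕ} (hn : a + b = n) (k : ℤ) :
    (k * p ^ a : ZMod (p ^ n)) = 0 ↔ (p : ℤ) ^ b ∣ k := by
  subst hn
  have h_cast : (k * p ^ a : ZMod (p ^ (a + b))) = ((k * p ^ a : ℤ) : ZMod (p ^ (a + b))) := by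
    push_cast; rfl
  rw [h_cast, ZMod.intCast_zmod_eq_zero_iff_dvd, Nat.cast_pow, pow_add, mul_comm,
    mul_dvd_mul_iff_right (pow_ne_zero a (Nat.cast_ne_zero.mpr hp))]

theorem addOrderOf_zmod_pow (hp : p ≠ 0) (a b : ℕ) :
    addOrderOf (p ^ a : ZMod (p ^ (a + b))) = p ^ b := by
  rw [← Nat.cast_pow, ZMod.addOrderOf_coe _ (pow_ne_zero _ hp), pow_gcd_pow_eq_pow_min,
    min_eq_right (Nat.le_add_right a b), pow_add,
    Nat.mul_div_cancel_left _ (pow_pos (Nat.pos_of_ne_zero hp) a)]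

end ZModPow

section Bipicket

variable {p m r : ℕ}

/-- The subgroup `A` of the bipicket `T_2^{m,r} = (A ⊆ ℤ/p^m ⊕ ℤ/p^r)`, generated by
`(p^(m-2), p^(r-1))`. The subtractions are truncated, so this is meant for `2 ≤ m` and `1 ≤ r`. -/
def bipicketSubgroup (p m r : ℕ) : AddSubgroup (ZMod (p ^ m) × ZMod (p ^ r)) :=
  zmultiples ((p : ZMod (p ^ m)) ^ (m - 2), (p : ZMod (p ^ r)) ^ (r - 1))

theorem mem_bipicketSubgroup {z : ZMod (p ^ m) × ZMod (p ^ r)} :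
    z ∈ bipicketSubgroup p m r ↔ ∃ k : ℤ, k * (p : ZMod (p ^ m)) ^ (m - 2) = z.1 ∧
      k * (p : ZMod (p ^ r)) ^ (r - 1) = z.2 := by
  simp only [bipicketSubgroup, mem_zmultiples_iff, Prod.ext_iff, Prod.smul_mk, zsmul_eq_mul]

theorem card_bipicketSubgroup (hp : p ≠ 0) (hm : 2 ≤ m) (hr : 1 ≤ r) :
    Nat.card (bipicketSubgroup p m r) = p ^ 2 := by
  obtain ⟨a, rfl⟩ := Nat.exists_eq_add_of_le' hm
  obtain ⟨b, rfl⟩ := Nat.exists_eq_add_of_le' hr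
  rw [bipicketSubgroup, Nat.card_zmultiples, Prod.addOrderOf, Nat.add_sub_cancel,
    Nat.add_sub_cancel, addOrderOf_zmod_pow hp, addOrderOf_zmod_pow hp]
  exact Nat.lcm_eq_left (pow_dvd_pow p one_le_two)

theorem bipicketSubgroup_le_torsionBy (hp : p ≠ 0) (hm : 2 ≤ m) (hr : 1 ≤ r) {u : ℕ}
    (hu : 2 ≤ u) :
    bipicketSubgroup p m r ≤ torsionBy (ZMod (p ^ m) × ZMod (p ^ r)) ((p ^ u : ℕ) : ℤ) := by
  intro z hz
  rw [torsionBy.nsmul_iff, ← addOrderOf_dvd_iff_nsmul_eq_zero]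
  calc addOrderOf z ∣ Nat.card (bipicketSubgroup p m r) := addOrderOf_dvd_natCard _ hz
    _ = p ^ 2 := card_bipicketSubgroup hp hm hr
    _ ∣ p ^ u := pow_dvd_pow p hu

-- Both sides say that `p` divides the multiplier of the generator.
theorem nsmul_fst_eq_zero_iff_snd_eq_zero (hp : p ≠ 0) (hm : 2 ≤ m) (hr : 1 ≤ r)
    {z : ZMod (p ^ m) × ZMod (p ^ r)} (hz : z ∈ bipicketSubgroup p m r) :
    p • z.1 = 0 ↔ z.2 = 0 := by
  obtain ⟨k, hk_fst, hk_snd⟩ := mem_bipicketSubgroup.mp hz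
  obtain ⟨a, rfl⟩ := Nat.exists_eq_add_of_le' hm
  obtain ⟨b, rfl⟩ := Nat.exists_eq_add_of_le' hr
  have h_fst : p • z.1 = k * (p : ZMod (p ^ (a + 2))) ^ (a + 1) := by
    rw [← hk_fst, nsmul_eq_mul, Nat.add_sub_cancel]; ring
  rw [h_fst, ← hk_snd, Nat.add_sub_cancel, intCast_mul_pow_eq_zero_iff hp rfl,
    intCast_mul_pow_eq_zero_iff hp (b := 1) rfl]

theorem torsionBy_prod_bot_le_bipicketSubgroup (hp : p ≠ 0) (hm : 2 ≤ m) (hr : 1 ≤ r) :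
    (torsionBy (ZMod (p ^ m)) p).prod ⊥ ≤ bipicketSubgroup p m r := by
  rintro ⟨x, y⟩ ⟨hx : x ∈ torsionBy _ _, hy : y = 0⟩
  obtain ⟨a, rfl⟩ := Nat.exists_eq_add_of_le' hm
  obtain ⟨b, rfl⟩ := Nat.exists_eq_add_of_le' hr
  obtain ⟨l, rfl⟩ := ZMod.intCast_surjective x
  obtain ⟨t, rfl⟩ : (p : ℤ) ^ (a + 1) ∣ l := by
    rw [← intCast_mul_pow_eq_zero_iff hp (Nat.add_comm 1 (a + 1)), pow_one, mul_comm,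
      ← nsmul_eq_mul]
    exact torsionBy.nsmul_iff.mp hx
  refine mem_bipicketSubgroup.mpr ⟨t * p, ?_, ?_⟩
  · push_cast [Nat.add_sub_cancel]
    ring
  · rw [hy, Nat.add_sub_cancel, intCast_mul_pow_eq_zero_iff hp rfl, pow_one]
    exact dvd_mul_left _ _

theorem bipicketSubgroup_inf_torsionBy (hp : p ≠ 0) (hm : 2 ≤ m) (hr : 1 ≤ r) :
    bipicketSubgroup p m r ⊓ torsionBy (ZMod (p ^ m) × ZMod (p ^ r)) p =
      (torsionBy (ZMod (p ^ m)) p).prod ⊥ := by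
  apply le_antisymm
  · rintro z ⟨hz, hz_tors⟩
    rw [torsionBy_prod] at hz_tors
    have hz_fst := hz_tors.1
    exact ⟨hz_fst, (nsmul_fst_eq_zero_iff_snd_eq_zero hp hm hr hz).mp
      (torsionBy.nsmul_iff.mp hz_fst)⟩
  · refine le_inf (torsionBy_prod_bot_le_bipicketSubgroup hp hm hr) ?_
    rw [torsionBy_prod]
    exact prod_mono le_rfl bot_le

theorem bipicketSubgroup_inf_top_prod_bot (hp : p ≠ 0) (hm : 2 ≤ m) (hr : 1 ≤ r) :
    bipicketSubgroup p m r ⊓ (⊤ : AddSubgroup (ZMod (p ^ m))).prod ⊥ =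
      (torsionBy (ZMod (p ^ m)) p).prod ⊥ := by
  apply le_antisymm
  · rintro z ⟨hz, -, hz_snd⟩
    exact ⟨torsionBy.nsmul_iff.mpr <|
      (nsmul_fst_eq_zero_iff_snd_eq_zero hp hm hr hz).mpr hz_snd, hz_snd⟩
  · exact le_inf (torsionBy_prod_bot_le_bipicketSubgroup hp hm hr) (prod_mono le_top le_rfl)

theorem bipicketSubgroup_le_range_nsmul {w : ℕ} (hwm : w ≤ m - 2) (hwr : w ≤ r - 1) :
    bipicketSubgroup p m r ≤
      (nsmulAddMonoidHom (p ^ w) : ZMod (p ^ m) × ZMod (p ^ r) →+ _).range := by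
  refine zmultiples_le.mpr ⟨(p ^ (m - 2 - w), p ^ (r - 1 - w)), ?_⟩
  simp only [nsmulAddMonoidHom_apply, Prod.smul_mk, nsmul_eq_mul, Nat.cast_pow, ← pow_add,
    Nat.add_sub_cancel' hwm, Nat.add_sub_cancel' hwr]

theorem card_comap_torsionBy_prod_bot (hp : p ≠ 0) (w : ℕ) :
    Nat.card (((torsionBy (ZMod (p ^ m)) p).prod (⊥ : AddSubgroup (ZMod (p ^ r)))).comap
      (nsmulAddMonoidHom (p ^ w))) = p ^ (min w r + min (w + 1) m) := by
  rw [comap_nsmulAddMonoidHom_torsionBy_prod_bot, ← pow_succ', card_torsionBy_zmod_pow_prod hp]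

theorem comap_bipicketSubgroup_of_le (hp : p ≠ 0) (hm : 2 ≤ m) (hr : 1 ≤ r) {w : ℕ}
    (hw : r ≤ w) :
    (bipicketSubgroup p m r).comap (nsmulAddMonoidHom (p ^ w)) =
      ((torsionBy (ZMod (p ^ m)) p).prod ⊥).comap (nsmulAddMonoidHom (p ^ w)) := by
  have h_snd (y : ZMod (p ^ r)) : p ^ w • y = 0 := by
    have h_cast : ((p ^ w : ℕ) : ZMod (p ^ r)) = 0 :=
      (ZMod.natCast_eq_zero_iff _ _).mpr (pow_dvd_pow p hw)
    rw [nsmul_eq_mul, h_cast, zero_mul]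
  have h_top : ((⊤ : AddSubgroup (ZMod (p ^ m))).prod (⊥ : AddSubgroup (ZMod (p ^ r)))).comap
      (nsmulAddMonoidHom (p ^ w)) = ⊤ :=
    (eq_top_iff' _).mpr fun z => ⟨mem_top _, h_snd z.2⟩
  rw [← bipicketSubgroup_inf_top_prod_bot hp hm hr, comap_inf, h_top, inf_top_eq]

theorem card_comap_bipicketSubgroup (hp : p ≠ 0) (hr : 1 ≤ r) (hrm : r < m) (w : ℕ) :
    Nat.card ((bipicketSubgroup p m r).comap (nsmulAddMonoidHom (p ^ w))) =
      p ^ (min (w + 1) r + min (w + 1) m) := by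
  have hm : 2 ≤ m := by omega
  rcases lt_or_ge w r with hw | hw
  · rw [card_comap_of_le_range _ (bipicketSubgroup_le_range_nsmul (by omega) (by omega)),
      ker_nsmulAddMonoidHom, torsionBy_prod, card_torsionBy_zmod_pow_prod hp,
      card_bipicketSubgroup hp hm hr, ← pow_add]
    congr 1
    omega
  · rw [comap_bipicketSubgroup_of_le hp hm hr hw, card_comap_torsionBy_prod_bot hp,
      min_eq_right hw, min_eq_right (Nat.le_succ_of_le hw)]

end Bipicket

theorem stmt_7_general (p : ℕ) (hp : p ≠ 0) (u v m r : ℕ) (huv : u ≤ v) (hr : 1 ≤ r)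
    (hrm : r < m) :
    Nat.card {f : ZMod (p ^ v) →+ (ZMod (p ^ m) × ZMod (p ^ r)) //
        ∀ a ∈ AddSubgroup.zmultiples ((p : ZMod (p ^ v)) ^ (v - u)),
          f a ∈ AddSubgroup.zmultiples
            ((p : ZMod (p ^ m)) ^ (m - 2), (p : ZMod (p ^ r)) ^ (r - 1))} =
      if u = 0 then p ^ (min v r + min v m)
      else if u = 1 then p ^ (min (v - 1) r + min v m)
      else p ^ (min (v - u + 1) r + min (v - u + 1) m) := by
  have hm : 2 ≤ m := by omega
  have h_comap := card_zmodHom_map_zmultiples_mem (pow_mul_pow_sub p huv) (bipicketSubgroup p m r)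
  rw [Nat.cast_pow] at h_comap
  refine h_comap.trans ?_
  split_ifs with hu0 hu1
  · have h_bot : torsionBy (ZMod (p ^ m) × ZMod (p ^ r)) ((p ^ 0 : ℕ) : ℤ) = ⊥ := by
      ext z
      rw [torsionBy.nsmul_iff, pow_zero, one_nsmul, mem_bot]
    rw [hu0, h_bot, inf_bot_eq, AddMonoidHom.comap_bot, ker_nsmulAddMonoidHom, torsionBy_prod,
      card_torsionBy_zmod_pow_prod hp, Nat.sub_zero]
  · rw [hu1, pow_one, bipicketSubgroup_inf_torsionBy hp hm hr, card_comap_torsionBy_prod_bot hp,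
      Nat.sub_add_cancel (hu1 ▸ huv)]
  · rw [inf_eq_left.mpr (bipicketSubgroup_le_torsionBy hp hm hr (by omega)),
      card_comap_bipicketSubgroup hp hr hrm]

/-- The number of morphisms of pairs from the picket `P_u^v` to the bipicket `T_2^{m,r}`,
i.e. homomorphisms `f : ℤ/p^v → ℤ/p^m ⊕ ℤ/p^r` with
`f(p^{v-u}(ℤ/p^v)) ⊆ ⟨(p^{m-2}, p^{r-1})⟩`. -/
theorem stmt_7 (p : ℕ) (hp : p.Prime) (u v m r : ℕ) (huv : u ≤ v) (h1 : 1 ≤ r)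
    (h2 : r + 2 ≤ m) :
    Nat.card {f : ZMod (p ^ v) →+ (ZMod (p ^ m) × ZMod (p ^ r)) //
        ∀ a ∈ AddSubgroup.zmultiples ((p : ZMod (p ^ v)) ^ (v - u)),
          f a ∈ AddSubgroup.zmultiples
            ((p : ZMod (p ^ m)) ^ (m - 2), (p : ZMod (p ^ r)) ^ (r - 1))} =
      if u = 0 then p ^ (min v r + min v m)
      else if u = 1 then p ^ (min (v - 1) r + min v m)
      else p ^ (min (v - u + 1) r + min (v - u + 1) m) :=
  stmt_7_general p hp.ne_zero u v m r huv h1 (by omega)
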